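/- There exists a constant C depending only on m and δ such that for every measurable Z : ℝ² → ℂ: ‖⟨k⟩^m·A(k)·|η − kt|·Z‖_{L²_k L¹_η} ≤ C·μ^{−1/4}·( E^{1/2}·D_γ^{1/4} + μ^{−δ}·E^{1/2−2δ}·D_α^{1/4+δ} ). -/

import Mathlib

open MeasureTheory Real
open scoped ENNReal NNReal

noncomputable section

/-- The Japanese bracket `⟨k⟩ = (1+k²)^{1/2}`. -/
def jap (k : ℝ) : ℝ := Real.sqrt (1 + k ^ 2)

/-- The moving-frame symbol `p(k,η) = k² + (η − kt)²`. -/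
def pw (t k η : ℝ) : ℝ := k ^ 2 + (η - k * t) ^ 2

/-- The weight `A(k)`. -/
def Aw (μ k : ℝ) : ℝ :=
  if |k| < μ then 1 else μ ^ ((1 : ℝ) / 3) * |k| ^ (-(1 : ℝ) / 3)

/-- The weight `B(k)`. -/
def Bw (μ k : ℝ) : ℝ :=
  if |k| < μ then μ ^ (-(1 : ℝ) / 2) else μ ^ ((1 : ℝ) / 6) * |k| ^ (-(2 : ℝ) / 3)

/-- Weighted `L¹(ℝ²)` norm `‖w·Z‖_{L¹}` (iterated, value in `[0,∞]`). -/
def L1n (w : ℝ → ℝ → ℝ) (Z : ℝ × ℝ → ℂ) : ℝ≥0∞ :=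
  ∫⁻ k : ℝ, ∫⁻ η : ℝ, ENNReal.ofReal (w k η) * (‖Z (k, η)‖₊ : ℝ≥0∞)

/-- Weighted `L²(ℝ²)` norm `‖w·Z‖_{L²}` (value in `[0,∞]`). -/
def L2n (w : ℝ → ℝ → ℝ) (Z : ℝ × ℝ → ℂ) : ℝ≥0∞ :=
  (∫⁻ k : ℝ, ∫⁻ η : ℝ,
      (ENNReal.ofReal (w k η) * (‖Z (k, η)‖₊ : ℝ≥0∞)) ^ 2) ^ ((1 : ℝ) / 2)

/-- Weighted mixed norm `‖w·Z‖_{L²_k L¹_η}` (value in `[0,∞]`). -/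
def L2L1n (w : ℝ → ℝ → ℝ) (Z : ℝ × ℝ → ℂ) : ℝ≥0∞ :=
  (∫⁻ k : ℝ,
      (∫⁻ η : ℝ, ENNReal.ofReal (w k η) * (‖Z (k, η)‖₊ : ℝ≥0∞)) ^ 2) ^ ((1 : ℝ) / 2)

/-- The energy `E = ‖⟨k⟩^m Z‖_{L²} + ‖⟨k⟩^m A(k)(η−kt) Z‖_{L²}`. -/
def En (t μ m : ℝ) (Z : ℝ × ℝ → ℂ) : ℝ≥0∞ :=
  L2n (fun k _ => jap k ^ m) Z + L2n (fun k η => jap k ^ m * Aw μ k * |η - k * t|) Z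

/-- The dissipation `D_γ = μ·∬ ⟨k⟩^{2m} p |Z|²`. -/
def Dg (t μ m : ℝ) (Z : ℝ × ℝ → ℂ) : ℝ≥0∞ :=
  ENNReal.ofReal μ * ∫⁻ k : ℝ, ∫⁻ η : ℝ,
    ENNReal.ofReal (jap k ^ (2 * m) * pw t k η) * (‖Z (k, η)‖₊ : ℝ≥0∞) ^ 2

/-- The dissipation `D_τ = ∬ ⟨k⟩^{2m} k² p⁻¹ |Z|²`. -/
def Dtau (t m : ℝ) (Z : ℝ × ℝ → ℂ) : ℝ≥0∞ :=
  ∫⁻ k : ℝ, ∫⁻ η : ℝ,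
    ENNReal.ofReal (jap k ^ (2 * m) * k ^ 2 / pw t k η) * (‖Z (k, η)‖₊ : ℝ≥0∞) ^ 2

/-- The dissipation `D_α = μ·∬ ⟨k⟩^{2m} A(k)² (η−kt)² p |Z|²`. -/
def Dal (t μ m : ℝ) (Z : ℝ × ℝ → ℂ) : ℝ≥0∞ :=
  ENNReal.ofReal μ * ∫⁻ k : ℝ, ∫⁻ η : ℝ,
    ENNReal.ofReal (jap k ^ (2 * m) * Aw μ k ^ 2 * (η - k * t) ^ 2 * pw t k η)
      * (‖Z (k, η)‖₊ : ℝ≥0∞) ^ 2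

/-- The dissipation `D_{τα} = ∬ ⟨k⟩^{2m} A(k)² k² (η−kt)² p⁻¹ |Z|²`. -/
def Dta (t μ m : ℝ) (Z : ℝ × ℝ → ℂ) : ℝ≥0∞ :=
  ∫⁻ k : ℝ, ∫⁻ η : ℝ,
    ENNReal.ofReal (jap k ^ (2 * m) * Aw μ k ^ 2 * k ^ 2 * (η - k * t) ^ 2 / pw t k η)
      * (‖Z (k, η)‖₊ : ℝ≥0∞) ^ 2

/-- The dissipation `D_β = ∬ ⟨k⟩^{2m} B(k)² k² |Z|²`. -/
def Db (t μ m : ℝ) (Z : ℝ × ℝ → ℂ) : ℝ≥0∞ :=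
  ∫⁻ k : ℝ, ∫⁻ η : ℝ,
    ENNReal.ofReal (jap k ^ (2 * m) * Bw μ k ^ 2 * k ^ 2) * (‖Z (k, η)‖₊ : ℝ≥0∞) ^ 2

/-!
Write `y = η - k t`. Where `|y| ≤ 1`, `A ≤ 1` and `|y| ≤ √p` give `A |y| ≤ p ^ (1 / 4)`; where
`1 ≤ |y|`, one inserts `1 ≤ |y| ^ (-q) * p ^ (q / 2)` with `q = 1 / 2 + 2 δ`. Since `2 q > 1`, in
both regions the weight is a factor square-integrable in `η`, uniformly in `k` and `t`, times a
geometric mean of two weights occurring in `E` and in `D_γ`, respectively `D_α`. Cauchy–Schwarz in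
`η` removes the factor, and Hölder, first in `η` and then in `k`, turns the geometric mean of the
weights into that of the weighted `L²` norms.
-/

section Hoelder

lemma ennreal_sq_rpow (a : ℝ≥0∞) (s : ℝ) : (a ^ 2) ^ s = (a ^ s) ^ 2 := by
  rw [← ENNReal.rpow_natCast_mul, mul_comm, ENNReal.rpow_mul_natCast]

variable {α β : Type*} [MeasurableSpace α] [MeasurableSpace β] {μ : Measure α} {ν : Measure β}

lemma sq_lintegral_mul_le {f g : α → ℝ≥0∞} (hf : AEMeasurable f μ) (hg : AEMeasurable g μ) :
    (∫⁻ x, f x * g x ∂μ) ^ 2 ≤ (∫⁻ x, f x ^ 2 ∂μ) * ∫⁻ x, g x ^ 2 ∂μ := by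
  have hsqrt (a : ℝ≥0∞) : (a ^ ((1 : ℝ) / 2)) ^ 2 = a := by
    rw [← ENNReal.rpow_mul_natCast]; norm_num
  have hCS := ENNReal.lintegral_mul_le_Lp_mul_Lq μ .two_two hf hg
  simp only [Pi.mul_apply, ENNReal.rpow_two] at hCS
  calc (∫⁻ x, f x * g x ∂μ) ^ 2
      ≤ ((∫⁻ x, f x ^ 2 ∂μ) ^ ((1 : ℝ) / 2) * (∫⁻ x, g x ^ 2 ∂μ) ^ ((1 : ℝ) / 2)) ^ 2 := by gcongr
    _ = _ := by rw [mul_pow, hsqrt, hsqrt]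

lemma lintegral_sq_rpow_mul_rpow_le {f g : α → ℝ≥0∞} (hf : AEMeasurable f μ)
    (hg : AEMeasurable g μ) {p q : ℝ} (hp : 0 ≤ p) (hq : 0 ≤ q) (hpq : p + q = 1) :
    ∫⁻ x, (f x ^ p * g x ^ q) ^ 2 ∂μ ≤ (∫⁻ x, f x ^ 2 ∂μ) ^ p * (∫⁻ x, g x ^ 2 ∂μ) ^ q := by
  simp only [mul_pow, ← ennreal_sq_rpow]
  exact ENNReal.lintegral_mul_norm_pow_le (hf.pow_const 2) (hg.pow_const 2) hp hq hpq

lemma lintegral_sq_lintegral_mul_rpow_mul_rpow_le [SFinite ν] {f g h : α → β → ℝ≥0∞}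
    (hf : Measurable (Function.uncurry f)) (hg : Measurable (Function.uncurry g))
    (hh : ∀ x, Measurable (h x)) {K : ℝ≥0∞} (hK : ∀ x, ∫⁻ y, h x y ^ 2 ∂ν ≤ K)
    {p q : ℝ} (hp : 0 ≤ p) (hq : 0 ≤ q) (hpq : p + q = 1) :
    ∫⁻ x, (∫⁻ y, h x y * (f x y ^ p * g x y ^ q) ∂ν) ^ 2 ∂μ ≤
      K * ((∫⁻ x, ∫⁻ y, f x y ^ 2 ∂ν ∂μ) ^ p * (∫⁻ x, ∫⁻ y, g x y ^ 2 ∂ν ∂μ) ^ q) := by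
  have hfx (x : α) : Measurable (f x) := hf.of_uncurry_left
  have hgx (x : α) : Measurable (g x) := hg.of_uncurry_left
  have hF : Measurable fun x ↦ ∫⁻ y, f x y ^ 2 ∂ν := (hf.pow_const 2).lintegral_prod_right'
  have hG : Measurable fun x ↦ ∫⁻ y, g x y ^ 2 ∂ν := (hg.pow_const 2).lintegral_prod_right'
  have hfiber (x : α) : (∫⁻ y, h x y * (f x y ^ p * g x y ^ q) ∂ν) ^ 2 ≤
      K * ((∫⁻ y, f x y ^ 2 ∂ν) ^ p * (∫⁻ y, g x y ^ 2 ∂ν) ^ q) :=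
    (sq_lintegral_mul_le (hh x).aemeasurable
      (((hfx x).pow_const p).mul ((hgx x).pow_const q)).aemeasurable).trans <|
      mul_le_mul' (hK x) <| lintegral_sq_rpow_mul_rpow_le (hfx x).aemeasurable
        (hgx x).aemeasurable hp hq hpq
  calc ∫⁻ x, (∫⁻ y, h x y * (f x y ^ p * g x y ^ q) ∂ν) ^ 2 ∂μ
      ≤ ∫⁻ x, K * ((∫⁻ y, f x y ^ 2 ∂ν) ^ p * (∫⁻ y, g x y ^ 2 ∂ν) ^ q) ∂μ := lintegral_mono hfiber
    _ = K * ∫⁻ x, (∫⁻ y, f x y ^ 2 ∂ν) ^ p * (∫⁻ y, g x y ^ 2 ∂ν) ^ q ∂μ :=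
      lintegral_const_mul _ (by fun_prop)
    _ ≤ _ := by
      gcongr
      exact ENNReal.lintegral_mul_norm_pow_le hF.aemeasurable hG.aemeasurable hp hq hpq

end Hoelder

section WeightedNorms

variable {Z : ℝ × ℝ → ℂ}

lemma measurable_ofReal_mul_nnnorm {w : ℝ → ℝ → ℝ} (hw : Measurable (Function.uncurry w))
    (hZ : Measurable Z) : Measurable
      (Function.uncurry fun k η ↦ ENNReal.ofReal (w k η) * (‖Z (k, η)‖₊ : ℝ≥0∞)) :=
  hw.ennreal_ofReal.mul hZ.nnnorm.coe_nnreal_ennreal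

lemma L2n_sq (w : ℝ → ℝ → ℝ) (Z : ℝ × ℝ → ℂ) :
    L2n w Z ^ 2 = ∫⁻ k : ℝ, ∫⁻ η : ℝ, (ENNReal.ofReal (w k η) * (‖Z (k, η)‖₊ : ℝ≥0∞)) ^ 2 := by
  rw [L2n, ← ENNReal.rpow_mul_natCast]
  norm_num

lemma L2n_sq_eq_lintegral_ofReal_sq {w : ℝ → ℝ → ℝ} (hw : ∀ k η, 0 ≤ w k η) (Z : ℝ × ℝ → ℂ) :
    L2n w Z ^ 2 = ∫⁻ k : ℝ, ∫⁻ η : ℝ, ENNReal.ofReal (w k η ^ 2) * (‖Z (k, η)‖₊ : ℝ≥0∞) ^ 2 := by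
  simp only [L2n_sq, mul_pow, ENNReal.ofReal_pow (hw _ _)]

lemma L2L1n_sq (w : ℝ → ℝ → ℝ) (Z : ℝ × ℝ → ℂ) : L2L1n w Z ^ 2 =
    ∫⁻ k : ℝ, (∫⁻ η : ℝ, ENNReal.ofReal (w k η) * (‖Z (k, η)‖₊ : ℝ≥0∞)) ^ 2 := by
  rw [L2L1n, ← ENNReal.rpow_mul_natCast]
  norm_num

lemma L2L1n_le_add {w w₁ w₂ : ℝ → ℝ → ℝ} (hw₁ : Measurable (Function.uncurry w₁))
    (hw₂ : Measurable (Function.uncurry w₂)) (hw : ∀ k η, w k η ≤ w₁ k η + w₂ k η)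
    (hZ : Measurable Z) : L2L1n w Z ≤ L2L1n w₁ Z + L2L1n w₂ Z := by
  have hfiber (k : ℝ) : ∫⁻ η, ENNReal.ofReal (w k η) * (‖Z (k, η)‖₊ : ℝ≥0∞) ≤
      (∫⁻ η, ENNReal.ofReal (w₁ k η) * (‖Z (k, η)‖₊ : ℝ≥0∞)) +
        ∫⁻ η, ENNReal.ofReal (w₂ k η) * (‖Z (k, η)‖₊ : ℝ≥0∞) := by
    rw [← lintegral_add_left (measurable_ofReal_mul_nnnorm hw₁ hZ).of_uncurry_left]
    gcongr with η
    rw [← add_mul]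
    gcongr
    exact (ENNReal.ofReal_le_ofReal (hw k η)).trans ENNReal.ofReal_add_le
  have hMinkowski := ENNReal.lintegral_Lp_add_le (μ := volume) (p := 2)
    ((measurable_ofReal_mul_nnnorm hw₁ hZ).lintegral_prod_right' (ν := volume)).aemeasurable
    ((measurable_ofReal_mul_nnnorm hw₂ hZ).lintegral_prod_right' (ν := volume)).aemeasurable
    one_le_two
  simp only [Pi.add_apply, ENNReal.rpow_two, Function.uncurry_apply_pair] at hMinkowski
  refine le_trans ?_ hMinkowski
  unfold L2L1n
  gcongr with k
  exact hfiber k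

lemma L2L1n_mul_rpow_mul_rpow_le {h u v : ℝ → ℝ → ℝ} (hh : Measurable (Function.uncurry h))
    (hu : Measurable (Function.uncurry u)) (hv : Measurable (Function.uncurry v))
    (hh₀ : ∀ k η, 0 ≤ h k η) (hu₀ : ∀ k η, 0 ≤ u k η) (hv₀ : ∀ k η, 0 ≤ v k η)
    {K : ℝ≥0∞} (hK : ∀ k, ∫⁻ η, ENNReal.ofReal (h k η) ^ 2 ≤ K ^ 2)
    {p q : ℝ} (hp : 0 ≤ p) (hq : 0 ≤ q) (hpq : p + q = 1) (hZ : Measurable Z) :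
    L2L1n (fun k η ↦ h k η * (u k η ^ p * v k η ^ q)) Z ≤
      K * (L2n u Z ^ p * L2n v Z ^ q) := by
  have hsplit (k η : ℝ) :
      ENNReal.ofReal (h k η * (u k η ^ p * v k η ^ q)) * (‖Z (k, η)‖₊ : ℝ≥0∞) =
        ENNReal.ofReal (h k η) * ((ENNReal.ofReal (u k η) * (‖Z (k, η)‖₊ : ℝ≥0∞)) ^ p *
          (ENNReal.ofReal (v k η) * (‖Z (k, η)‖₊ : ℝ≥0∞)) ^ q) := by
    have hz : (‖Z (k, η)‖₊ : ℝ≥0∞) = (‖Z (k, η)‖₊ : ℝ≥0∞) ^ p * (‖Z (k, η)‖₊ : ℝ≥0∞) ^ q := by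
      rw [← ENNReal.rpow_add_of_nonneg _ _ hp hq, hpq, ENNReal.rpow_one]
    rw [ENNReal.ofReal_mul (hh₀ k η), ENNReal.ofReal_mul (Real.rpow_nonneg (hu₀ k η) p),
      ← ENNReal.ofReal_rpow_of_nonneg (hu₀ k η) hp, ← ENNReal.ofReal_rpow_of_nonneg (hv₀ k η) hq,
      ENNReal.mul_rpow_of_nonneg _ _ hp, ENNReal.mul_rpow_of_nonneg _ _ hq]
    nth_rw 1 [hz]
    ring
  have hHoelder := lintegral_sq_lintegral_mul_rpow_mul_rpow_le (μ := volume)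
    (h := fun k η ↦ ENNReal.ofReal (h k η)) (measurable_ofReal_mul_nnnorm hu hZ)
    (measurable_ofReal_mul_nnnorm hv hZ) (fun k ↦ hh.of_uncurry_left.ennreal_ofReal) hK hp hq hpq
  rw [← L2n_sq, ← L2n_sq, ennreal_sq_rpow, ennreal_sq_rpow, ← mul_pow, ← mul_pow] at hHoelder
  rw [← ENNReal.pow_le_pow_left_iff two_ne_zero, L2L1n_sq]
  simp only [hsplit]
  exact hHoelder

end WeightedNorms

section Decay

/-- The square-integrable factor, for `1 / 2 < q`, that Cauchy–Schwarz in `η` splits off. The `2`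
normalises it so that `1 ≤ decay q y` for `|y| ≤ 1` and `1 ≤ decay q y * |y| ^ q` for `1 ≤ |y|`. -/
def decay (q y : ℝ) : ℝ := (2 / (1 + |y|)) ^ q

lemma decay_nonneg (q y : ℝ) : 0 ≤ decay q y := by
  unfold decay; positivity

@[fun_prop]
lemma measurable_decay (q : ℝ) : Measurable (decay q) := by
  unfold decay; fun_prop

lemma one_le_decay {q y : ℝ} (hq : 0 ≤ q) (hy : |y| ≤ 1) : 1 ≤ decay q y :=
  Real.one_le_rpow ((one_le_div (by positivity)).2 (by linarith)) hq

lemma one_le_decay_mul_rpow {q y : ℝ} (hq : 0 ≤ q) (hy : 1 ≤ |y|) : 1 ≤ decay q y * |y| ^ q := by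
  rw [decay, ← Real.mul_rpow (by positivity) (by positivity)]
  refine Real.one_le_rpow ?_ hq
  rw [div_mul_eq_mul_div, one_le_div (by positivity)]
  linarith

lemma lintegral_decay_sq_lt_top {q : ℝ} (hq : 1 / 2 < q) :
    ∫⁻ y, ENNReal.ofReal (decay q y) ^ 2 < ∞ := by
  have hdecay (y : ℝ) : ENNReal.ofReal (decay q y) ^ 2 =
      ENNReal.ofReal (2 ^ (q * 2)) * ENNReal.ofReal ((1 + ‖y‖) ^ (-(q * 2))) := by
    rw [← ENNReal.ofReal_pow (decay_nonneg q y), ← ENNReal.ofReal_mul (by positivity), decay,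
      ← Real.rpow_mul_natCast (by positivity), Nat.cast_two,
      Real.div_rpow zero_le_two (by positivity), Real.rpow_neg (by positivity), div_eq_mul_inv,
      Real.norm_eq_abs]
  simp only [hdecay]
  rw [lintegral_const_mul' _ _ ENNReal.ofReal_ne_top]
  exact ENNReal.mul_lt_top ENNReal.ofReal_lt_top <|
    finite_integral_one_add_norm (by rw [Module.finrank_self]; push_cast; linarith)

lemma exists_lintegral_decay_sq_le {q : ℝ} (hq : 1 / 2 < q) :
    ∃ C : ℝ, 0 < C ∧ ∫⁻ y, ENNReal.ofReal (decay q y) ^ 2 ≤ ENNReal.ofReal C ^ 2 := by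
  set I := ∫⁻ y, ENNReal.ofReal (decay q y) ^ 2
  have hI : 0 ≤ I.toReal := ENNReal.toReal_nonneg
  refine ⟨I.toReal + 1, by positivity, ?_⟩
  rw [← ENNReal.ofReal_pow (by positivity),
    ENNReal.le_ofReal_iff_toReal_le (lintegral_decay_sq_lt_top hq).ne (by positivity)]
  nlinarith

end Decay

section Interpolation

lemma rpow_mul_mul_rpow {x r p q : ℝ} (hx : 0 ≤ x) (hr : 0 ≤ r) (hp : 0 ≤ p) (hq : 0 ≤ q)
    (hpq : p + q = 1) : x ^ p * (x * r) ^ q = x * r ^ q := by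
  rw [Real.mul_rpow hx hr, ← mul_assoc, ← Real.rpow_add_of_nonneg hx hp hq, hpq, Real.rpow_one]

lemma mul_abs_le_decay_mul_add {a q r y : ℝ} (ha₀ : 0 ≤ a) (ha₁ : a ≤ 1) (hq : 0 ≤ q)
    (hr : |y| ≤ r) :
    a * |y| ≤ decay q y * r ^ ((1 : ℝ) / 2) + decay q y * (a * |y| * r ^ q) := by
  have hr₀ : 0 ≤ r := (abs_nonneg y).trans hr
  have hd := decay_nonneg q y
  rcases le_total |y| 1 with hy | hy
  · calc a * |y| ≤ 1 * |y| ^ (1 : ℝ) := by rw [Real.rpow_one]; gcongr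
      _ ≤ decay q y * |y| ^ ((1 : ℝ) / 2) := by
        gcongr ?_ * ?_
        · exact one_le_decay hq hy
        · exact Real.rpow_le_rpow_of_exponent_ge_of_imp (abs_nonneg y) hy (by norm_num) (by simp)
      _ ≤ decay q y * r ^ ((1 : ℝ) / 2) := by gcongr
      _ ≤ _ := le_add_of_nonneg_right (by positivity)
  · calc a * |y| ≤ a * |y| * (decay q y * |y| ^ q) :=
        le_mul_of_one_le_right (by positivity) (one_le_decay_mul_rpow hq hy)
      _ ≤ a * |y| * (decay q y * r ^ q) := by gcongr
      _ = decay q y * (a * |y| * r ^ q) := by ring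
      _ ≤ _ := le_add_of_nonneg_left (by positivity)

theorem L2L1n_mul_abs_sub_le {J A c : ℝ → ℝ} {r : ℝ → ℝ → ℝ} (hJ : Measurable J)
    (hA : Measurable A) (hc : Measurable c) (hr : Measurable (Function.uncurry r))
    (hJ₀ : ∀ k, 0 ≤ J k) (hA₀ : ∀ k, 0 ≤ A k) (hA₁ : ∀ k, A k ≤ 1)
    (hcr : ∀ k η, |η - c k| ≤ r k η) {p q : ℝ} (hp : 0 ≤ p) (hq : 0 ≤ q) (hpq : p + q = 1)
    {K : ℝ≥0∞} (hK : ∫⁻ y, ENNReal.ofReal (decay q y) ^ 2 ≤ K ^ 2)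
    {Z : ℝ × ℝ → ℂ} (hZ : Measurable Z) :
    L2L1n (fun k η ↦ J k * A k * |η - c k|) Z ≤
      K * (L2n (fun k _ ↦ J k) Z ^ ((1 : ℝ) / 2) *
          L2n (fun k η ↦ J k * r k η) Z ^ ((1 : ℝ) / 2) +
        L2n (fun k η ↦ J k * A k * |η - c k|) Z ^ p *
          L2n (fun k η ↦ J k * A k * |η - c k| * r k η) Z ^ q) := by
  have hr₀ (k η : ℝ) : 0 ≤ r k η := (abs_nonneg _).trans (hcr k η)
  have hw₀ (k η : ℝ) : 0 ≤ J k * A k * |η - c k| :=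
    mul_nonneg (mul_nonneg (hJ₀ k) (hA₀ k)) (abs_nonneg _)
  have hh : Measurable (Function.uncurry fun k η ↦ decay q (η - c k)) := by
    unfold Function.uncurry; fun_prop
  have hu : Measurable (Function.uncurry fun k (_ : ℝ) ↦ J k) := by
    unfold Function.uncurry; fun_prop
  have hw : Measurable (Function.uncurry fun k η ↦ J k * A k * |η - c k|) := by
    simp only [Function.uncurry_def, ← Real.norm_eq_abs]; fun_prop
  have hK' (k : ℝ) : ∫⁻ η, ENNReal.ofReal (decay q (η - c k)) ^ 2 ≤ K ^ 2 := by
    rwa [lintegral_sub_right_eq_self fun y ↦ ENNReal.ofReal (decay q y) ^ 2]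
  have hpointwise (k η : ℝ) : J k * A k * |η - c k| ≤
      decay q (η - c k) * (J k ^ ((1 : ℝ) / 2) * (J k * r k η) ^ ((1 : ℝ) / 2)) +
      decay q (η - c k) *
        ((J k * A k * |η - c k|) ^ p * (J k * A k * |η - c k| * r k η) ^ q) := by
    rw [rpow_mul_mul_rpow (hJ₀ k) (hr₀ k η) (by norm_num) (by norm_num) (by norm_num),
      rpow_mul_mul_rpow (hw₀ k η) (hr₀ k η) hp hq hpq]
    linarith [mul_le_mul_of_nonneg_left
      (mul_abs_le_decay_mul_add (hA₀ k) (hA₁ k) hq (hcr k η)) (hJ₀ k)]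
  have hur : Measurable (Function.uncurry fun k η ↦ J k * r k η) := hu.mul hr
  have hwr : Measurable (Function.uncurry fun k η ↦ J k * A k * |η - c k| * r k η) := hw.mul hr
  refine (L2L1n_le_add (by exact hh.mul ((hu.pow_const _).mul (hur.pow_const _)))
    (by exact hh.mul ((hw.pow_const _).mul (hwr.pow_const _))) hpointwise hZ).trans ?_
  rw [mul_add]
  exact add_le_add
    (L2L1n_mul_rpow_mul_rpow_le hh hu hur (fun _ _ ↦ decay_nonneg _ _)
      (fun k _ ↦ hJ₀ k) (fun k η ↦ mul_nonneg (hJ₀ k) (hr₀ k η)) hK'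
      (by norm_num) (by norm_num) (by norm_num) hZ)
    (L2L1n_mul_rpow_mul_rpow_le hh hw hwr (fun _ _ ↦ decay_nonneg _ _)
      hw₀ (fun k η ↦ mul_nonneg (hw₀ k η) (hr₀ k η)) hK' hp hq hpq hZ)

end Interpolation

section Weights

lemma jap_nonneg (k : ℝ) : 0 ≤ jap k := Real.sqrt_nonneg _

@[fun_prop]
lemma measurable_jap : Measurable jap := by
  unfold jap; fun_prop

lemma jap_rpow_two_mul (k m : ℝ) : jap k ^ (2 * m) = (jap k ^ m) ^ 2 := by
  rw [mul_comm, ← Nat.cast_two, Real.rpow_mul_natCast (jap_nonneg k)]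

lemma pw_nonneg (t k η : ℝ) : 0 ≤ pw t k η := by
  unfold pw; positivity

lemma abs_sub_le_sqrt_pw (t k η : ℝ) : |η - k * t| ≤ √(pw t k η) :=
  Real.abs_le_sqrt (le_add_of_nonneg_left (sq_nonneg k))

lemma measurable_sqrt_pw (t : ℝ) : Measurable (Function.uncurry fun k η ↦ √(pw t k η)) := by
  unfold Function.uncurry pw; fun_prop

lemma Aw_nonneg {μ : ℝ} (hμ : 0 ≤ μ) (k : ℝ) : 0 ≤ Aw μ k := by
  unfold Aw; split_ifs <;> positivity

lemma Aw_le_one {μ : ℝ} (hμ : 0 < μ) (k : ℝ) : Aw μ k ≤ 1 := by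
  unfold Aw
  split_ifs with hk
  · exact le_rfl
  · have hμk : μ ≤ |k| := not_lt.1 hk
    rw [neg_div, Real.rpow_neg (abs_nonneg k), ← div_eq_mul_inv]
    exact div_le_one_of_le₀ (Real.rpow_le_rpow hμ.le hμk (by norm_num)) (by positivity)

lemma measurable_Aw (μ : ℝ) : Measurable (Aw μ) :=
  Measurable.ite (measurableSet_lt (by fun_prop) (by fun_prop)) (by fun_prop) (by fun_prop)

end Weights

section Dissipation

variable (t m : ℝ) {μ : ℝ} (Z : ℝ × ℝ → ℂ)

lemma Dg_eq_mul_L2n_sq :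
    Dg t μ m Z = ENNReal.ofReal μ * L2n (fun k η ↦ jap k ^ m * √(pw t k η)) Z ^ 2 := by
  have hJ (k : ℝ) : 0 ≤ jap k ^ m := Real.rpow_nonneg (jap_nonneg k) m
  rw [L2n_sq_eq_lintegral_ofReal_sq fun k η ↦ mul_nonneg (hJ k) (Real.sqrt_nonneg _)]
  simp only [Dg, mul_pow, Real.sq_sqrt (pw_nonneg _ _ _), jap_rpow_two_mul]

lemma Dal_eq_mul_L2n_sq (hμ : 0 ≤ μ) :
    Dal t μ m Z = ENNReal.ofReal μ *
      L2n (fun k η ↦ jap k ^ m * Aw μ k * |η - k * t| * √(pw t k η)) Z ^ 2 := by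
  have hJA (k : ℝ) : 0 ≤ jap k ^ m * Aw μ k :=
    mul_nonneg (Real.rpow_nonneg (jap_nonneg k) m) (Aw_nonneg hμ k)
  rw [L2n_sq_eq_lintegral_ofReal_sq fun k η ↦
    mul_nonneg (mul_nonneg (hJA k) (abs_nonneg _)) (Real.sqrt_nonneg _)]
  simp only [Dal, mul_pow, Real.sq_sqrt (pw_nonneg _ _ _), sq_abs, jap_rpow_two_mul]

lemma rpow_eq_ofReal_rpow_neg_mul (hμ : 0 < μ) {s : ℝ} (hs : 0 ≤ s) (x : ℝ≥0∞) :
    x ^ (2 * s) = ENNReal.ofReal (μ ^ (-s)) * (ENNReal.ofReal μ * x ^ 2) ^ s := by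
  rw [ENNReal.mul_rpow_of_nonneg _ _ hs, ENNReal.ofReal_rpow_of_nonneg hμ.le hs, ← mul_assoc,
    ← ENNReal.ofReal_mul (by positivity), ← Real.rpow_add hμ, neg_add_cancel, Real.rpow_zero,
    ENNReal.ofReal_one, one_mul, ← ENNReal.rpow_natCast_mul, Nat.cast_two]

lemma L2n_rpow_eq_Dg_rpow (hμ : 0 < μ) {s : ℝ} (hs : 0 ≤ s) :
    L2n (fun k η ↦ jap k ^ m * √(pw t k η)) Z ^ (2 * s) =
      ENNReal.ofReal (μ ^ (-s)) * Dg t μ m Z ^ s := by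
  rw [rpow_eq_ofReal_rpow_neg_mul hμ hs, Dg_eq_mul_L2n_sq]

lemma L2n_rpow_eq_Dal_rpow (hμ : 0 < μ) {s : ℝ} (hs : 0 ≤ s) :
    L2n (fun k η ↦ jap k ^ m * Aw μ k * |η - k * t| * √(pw t k η)) Z ^ (2 * s) =
      ENNReal.ofReal (μ ^ (-s)) * Dal t μ m Z ^ s := by
  rw [rpow_eq_ofReal_rpow_neg_mul hμ hs, Dal_eq_mul_L2n_sq t m Z hμ.le]

end Dissipation

theorem stmt18_general (δ : ℝ) (hδ : δ ∈ Set.Ioc (0 : ℝ) (1 / 4)) :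
    ∃ C : ℝ, 0 < C ∧
      ∀ (m t μ : ℝ), 0 < μ →
        ∀ Z : ℝ × ℝ → ℂ, Measurable Z →
          L2L1n (fun k η => jap k ^ m * Aw μ k * |η - k * t|) Z
            ≤ ENNReal.ofReal C *
                (ENNReal.ofReal (μ ^ (-(1 / 4 : ℝ))) *
                  (En t μ m Z ^ ((1 : ℝ) / 2) * Dg t μ m Z ^ ((1 : ℝ) / 4)
                    + ENNReal.ofReal (μ ^ (-δ)) * En t μ m Z ^ ((1 : ℝ) / 2 - 2 * δ)
                        * Dal t μ m Z ^ ((1 : ℝ) / 4 + δ))) := by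
  obtain ⟨hδ₀, hδ₁⟩ := hδ
  have hp : 0 ≤ 1 / 2 - 2 * δ := by linarith
  obtain ⟨C, hC, hCdecay⟩ := exists_lintegral_decay_sq_le (q := 2 * (1 / 4 + δ)) (by linarith)
  refine ⟨C, hC, fun m t μ hμ Z hZ ↦ ?_⟩
  have hinterp := L2L1n_mul_abs_sub_le (J := fun k ↦ jap k ^ m) (c := fun k ↦ k * t)
    (by fun_prop) (measurable_Aw μ) (by fun_prop) (measurable_sqrt_pw t)
    (fun k ↦ Real.rpow_nonneg (jap_nonneg k) m) (Aw_nonneg hμ.le) (Aw_le_one hμ)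
    (abs_sub_le_sqrt_pw t) hp (by linarith) (by ring) hCdecay hZ
  have hγ := L2n_rpow_eq_Dg_rpow t m Z hμ (s := 1 / 4) (by norm_num)
  have hα := L2n_rpow_eq_Dal_rpow t m Z hμ (s := 1 / 4 + δ) (by linarith)
  rw [show 2 * (1 / 4 : ℝ) = 1 / 2 by norm_num] at hγ
  rw [neg_add, Real.rpow_add hμ, ENNReal.ofReal_mul (by positivity)] at hα
  rw [hγ, hα] at hinterp
  refine hinterp.trans (mul_le_mul' le_rfl ?_)
  calc _ ≤ En t μ m Z ^ ((1 : ℝ) / 2) *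
          (ENNReal.ofReal (μ ^ (-(1 / 4 : ℝ))) * Dg t μ m Z ^ ((1 : ℝ) / 4)) +
        En t μ m Z ^ (1 / 2 - 2 * δ) * (ENNReal.ofReal (μ ^ (-(1 / 4 : ℝ))) *
          ENNReal.ofReal (μ ^ (-δ)) * Dal t μ m Z ^ (1 / 4 + δ)) := by
        gcongr
        · exact le_self_add
        · exact le_add_self
    _ = _ := by ring

/-- energy/α interpolation lemma: there is `C = C(m,δ)` such
that for all `t`, `μ ∈ (0,1)` and measurable `Z`,
`‖⟨k⟩^m A(k)|η−kt| Z‖_{L²_kL¹_η}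
  ≤ C μ^{−1/4}(E^{1/2}D_γ^{1/4} + μ^{−δ}E^{1/2−2δ}D_α^{1/4+δ})`. -/
theorem stmt18 (m δ : ℝ) (hm : 0 < m) (hδ : δ ∈ Set.Ioo (0 : ℝ) (1 / 12)) :
    ∃ C : ℝ, 0 < C ∧
      ∀ (t μ : ℝ), μ ∈ Set.Ioo (0 : ℝ) 1 →
        ∀ Z : ℝ × ℝ → ℂ, Measurable Z →
          L2L1n (fun k η => jap k ^ m * Aw μ k * |η - k * t|) Z
            ≤ ENNReal.ofReal C *
                (ENNReal.ofReal (μ ^ (-(1 / 4 : ℝ))) *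
                  (En t μ m Z ^ ((1 : ℝ) / 2) * Dg t μ m Z ^ ((1 : ℝ) / 4)
                    + ENNReal.ofReal (μ ^ (-δ)) * En t μ m Z ^ ((1 : ℝ) / 2 - 2 * δ)
                        * Dal t μ m Z ^ ((1 : ℝ) / 4 + δ))) := by
  obtain ⟨C, hC, hbound⟩ := stmt18_general δ ⟨hδ.1, by linarith [hδ.2]⟩
  exact ⟨C, hC, fun t μ hμ ↦ hbound m t μ hμ.1⟩
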